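/- Let K = ℂ(y), let J := PGL₂(K) ⋊ Aut_ℂ(K), and let f ∈ K be a nonsquare element. Then the normaliser of the subgroup T_f ⊆ PGL₂(K) ⊆ J in J equals the centraliser in J of the element ι_f (the class of the matrix ((0, f),(1, 0)), viewed in J with trivial automorphism component). -/

import Mathlib

/-!
The elements of `T_f` are the classes of invertible matrices `a + bM` with `M = !![0, f; 1, 0]`,
and `M ^ 2 = f`.

If `j` normalises `T_f`, then `j ι j⁻¹` is again an involution in `T_f`. Squaring gives
`(a + bM) ^ 2 = (a ^ 2 + b ^ 2 f) + 2ab M`, which is scalar only if `a = 0` or `b = 0`; so `ι` is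
the unique involution of `T_f` (`eq_of_mem_Tset_of_sq_eq_one`) and `j` commutes with it.

Conversely, if `j = (p(A), σ)` commutes with `ι`, then `A σ(M) A⁻¹ = c M` for some scalar `c`,
whence `A σ(a + bM) A⁻¹ = σ(a) + σ(b) c M`, so `j T_f j⁻¹ ⊆ T_f` (`conj_mem_of_commute`). Applying
this to `j⁻¹` as well shows that `j` normalises `T_f`.
-/

open Matrix Polynomial

noncomputable section

/-- K = ℂ(y), the field of rational functions in one variable over ℂ -/
abbrev K := RatFunc ℂ

/-- the general linear group GL₂(ℂ(y)) -/
abbrev GL2K := Matrix.GeneralLinearGroup (Fin 2) K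

/-- the projective general linear group PGL₂(ℂ(y)) = GL₂(ℂ(y))/centre -/
abbrev PGL2K := GL2K ⧸ Subgroup.center GL2K

/-- the canonical projection p : GL₂(ℂ(y)) → PGL₂(ℂ(y)) -/
def pglK : GL2K →* PGL2K := QuotientGroup.mk' _

/-- the subset T_f of PGL₂(ℂ(y)): classes of ((a, b·f), (b, a)) with (a,b) ≠ (0,0) -/
def Tset (f : K) : Set PGL2K :=
  { x | ∃ (M : GL2K) (a b : K), ¬(a = 0 ∧ b = 0) ∧
      (M : Matrix (Fin 2) (Fin 2) K) = !![a, b * f; b, a] ∧ x = pglK M }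

/-- the entrywise action of a ℂ-algebra automorphism of K on GL₂(K) -/
def glAut (σ : K ≃ₐ[ℂ] K) : GL2K ≃* GL2K :=
  Units.mapEquiv (RingEquiv.mapMatrix σ.toRingEquiv).toMulEquiv

lemma map_center {G H : Type*} [Group G] [Group H] (e : G ≃* H) :
    (Subgroup.center G).map e.toMonoidHom = Subgroup.center H := by
  ext h
  simp only [Subgroup.mem_map, Subgroup.mem_center_iff]
  constructor
  · rintro ⟨g, hg, rfl⟩ k
    have h1 : e.symm k * g = g * e.symm k := hg (e.symm k)
    have := congrArg e h1
    simpa [_root_.map_mul] using this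
  · intro hh
    refine ⟨e.symm h, fun g => e.injective ?_, by simp⟩
    have := hh (e g)
    simpa [_root_.map_mul] using this

/-- the induced automorphism of PGL₂(K) -/
def pglAut (σ : K ≃ₐ[ℂ] K) : PGL2K ≃* PGL2K :=
  QuotientGroup.congr _ _ (glAut σ) (map_center (glAut σ))

/-- the entrywise action of Aut_ℂ(K) on PGL₂(K), as a group homomorphism -/
def JAct : (K ≃ₐ[ℂ] K) →* MulAut PGL2K where
  toFun := pglAut
  map_one' := by
    ext x
    induction x using QuotientGroup.induction_on with
    | H g => rfl
  map_mul' σ τ := by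
    ext x
    induction x using QuotientGroup.induction_on with
    | H g => rfl

/-- the Jonquières group J = PGL₂(ℂ(y)) ⋊ Aut_ℂ(ℂ(y)), with the entrywise action -/
abbrev J := SemidirectProduct PGL2K (K ≃ₐ[ℂ] K) JAct

lemma pglK_eq_iff (M N : GL2K) : pglK M = pglK N ↔
    ∃ c : K, c ≠ 0 ∧ (N : Matrix (Fin 2) (Fin 2) K) = c • (M : Matrix (Fin 2) (Fin 2) K) := by
  unfold pglK
  rw [QuotientGroup.mk'_eq_mk']
  constructor
  · rintro ⟨z, hz, rfl⟩
    obtain ⟨c, hc⟩ := GeneralLinearGroup.mem_center_iff_val_mem_range_scalar.mp hz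
    refine ⟨c, ?_, ?_⟩
    · rintro rfl
      exact z.ne_zero (by simpa using hc.symm)
    · rw [Units.val_mul, ← hc, scalar_apply, ← smul_one_eq_diagonal]
      simp
  · rintro ⟨c, hc, h⟩
    refine ⟨M⁻¹ * N, GeneralLinearGroup.mem_center_iff_val_mem_range_scalar.mpr ⟨c, ?_⟩,
      mul_inv_cancel_left M N⟩
    rw [Units.val_mul, h, mul_smul_comm, Units.inv_mul, scalar_apply, smul_one_eq_diagonal]

lemma conj_inl (A N : GL2K) (σ : K ≃ₐ[ℂ] K) :
    (⟨pglK A, σ⟩ : J) * SemidirectProduct.inl (pglK N) * (⟨pglK A, σ⟩ : J)⁻¹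
      = SemidirectProduct.inl (pglK (A * glAut σ N * A⁻¹)) := by
  have h : JAct σ (pglK N) = pglK (glAut σ N) := rfl
  rw [mul_inv_eq_iff_eq_mul]
  ext <;> simp [h]

/-- The centraliser of `ι` conjugates `T_f` into itself: conjugation by `j = (p(A), σ)` sends
`a + bM` to `σ(a) + σ(b) c M`, where `c` is the scalar with `A σ(M) A⁻¹ = c M`. -/
lemma conj_mem_of_commute {f : K} {M : GL2K}
    (hM : (M : Matrix (Fin 2) (Fin 2) K) = !![0, f; 1, 0]) {j : J}
    (hj : j * SemidirectProduct.inl (pglK M) * j⁻¹ = SemidirectProduct.inl (pglK M)) {x : J}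
    (hx : x ∈ SemidirectProduct.inl '' Tset f) :
    j * x * j⁻¹ ∈ SemidirectProduct.inl '' Tset f := by
  obtain ⟨_, ⟨N, a, b, hab, hN, rfl⟩, rfl⟩ := hx
  obtain ⟨q, σ⟩ := j
  obtain ⟨A, rfl⟩ : ∃ A, pglK A = q := QuotientGroup.mk'_surjective _ q
  rw [conj_inl, SemidirectProduct.inl_inj] at hj
  obtain ⟨c, hc, h⟩ := (pglK_eq_iff _ _).mp hj.symm
  have hσ (L : GL2K) : (glAut σ L : Matrix (Fin 2) (Fin 2) K)
      = (L : Matrix (Fin 2) (Fin 2) K).map σ := rfl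
  have hNM : (N : Matrix (Fin 2) (Fin 2) K).map σ
      = σ a • (1 : Matrix (Fin 2) (Fin 2) K) + σ b • (M : Matrix (Fin 2) (Fin 2) K).map σ := by
    rw [hN, hM]
    ext i k
    fin_cases i <;> fin_cases k <;> simp
  rw [conj_inl]
  refine ⟨_, ⟨_, σ a, σ b * c, ?_, ?_, rfl⟩, rfl⟩
  · simpa [hc] using hab
  · rw [Units.val_mul, Units.val_mul, hσ] at h ⊢
    rw [hNM, mul_add, add_mul, mul_smul_comm, mul_smul_comm, smul_mul_assoc, smul_mul_assoc, h,
      mul_one, Units.mul_inv, hM]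
    ext i k
    fin_cases i <;> fin_cases k <;> simp [mul_assoc]

/-- `T_f` contains no involution other than the class of `!![0, f; 1, 0]`. -/
lemma eq_of_mem_Tset_of_sq_eq_one {f : K} {M : GL2K}
    (hM : (M : Matrix (Fin 2) (Fin 2) K) = !![0, f; 1, 0]) {t : PGL2K} (ht : t ∈ Tset f)
    (h1 : t ≠ 1) (h2 : t * t = 1) : t = pglK M := by
  obtain ⟨N, a, b, hab, hN, rfl⟩ := ht
  rw [← map_mul, ← map_one pglK] at h2
  obtain ⟨c, -, h⟩ := (pglK_eq_iff _ _).mp h2.symm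
  have h10 := congrFun (congrFun h 1) 0
  have hab' : a = 0 ∨ b = 0 := by
    rw [Units.val_mul, hN] at h10
    have h3 : (2 : K) * (a * b) = 0 := by
      simp [Matrix.mul_apply] at h10
      linear_combination h10
    simpa using h3
  rcases hab' with rfl | rfl
  · refine ((pglK_eq_iff _ _).mpr ⟨b, by simpa using hab, ?_⟩).symm
    rw [hN, hM]
    ext i k
    fin_cases i <;> fin_cases k <;> simp
  · refine absurd ?_ h1
    rw [← map_one pglK]
    refine ((pglK_eq_iff _ _).mpr ⟨a, by simpa using hab, ?_⟩).symm
    rw [hN]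
    ext i k
    fin_cases i <;> fin_cases k <;> simp

/-- Let `f ∈ ℂ(y)` be a nonsquare. The normaliser in J of `T_f ⊆ PGL₂(K) ⊆ J` equals the
centraliser in J of `ι_f` (the class of ((0,f),(1,0)), with trivial automorphism
component). -/
theorem stmt14 (f : K) (hf : ¬ IsSquare f) (iota : PGL2K)
    (hiota : ∃ M : GL2K, (M : Matrix (Fin 2) (Fin 2) K) = !![0, f; 1, 0] ∧ iota = pglK M) :
    { j : J | ∀ x, x ∈ SemidirectProduct.inl '' Tset f ↔
        j * x * j⁻¹ ∈ SemidirectProduct.inl '' Tset f }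
      = { j : J | j * SemidirectProduct.inl iota = SemidirectProduct.inl iota * j } := by
  obtain ⟨M, hM, rfl⟩ := hiota
  ext j
  simp only [Set.mem_ofPred_eq]
  rw [← mul_inv_eq_iff_eq_mul]
  constructor
  · intro hj
    have hmem : pglK M ∈ Tset f := ⟨M, 0, 1, by simp, by simpa using hM, rfl⟩
    obtain ⟨t, ht, htj⟩ := (hj _).mp ⟨_, hmem, rfl⟩
    rw [← htj]
    congr 1
    have hM1 : pglK M ≠ 1 := by
      rw [← map_one pglK]
      intro h
      obtain ⟨c, -, h⟩ := (pglK_eq_iff _ _).mp h.symm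
      have := congrFun (congrFun h 1) 0
      simp [hM] at this
    have hf0 : f ≠ 0 := by
      rintro rfl
      exact hf (IsSquare.zero)
    have hM2 : pglK M * pglK M = 1 := by
      rw [← map_mul, ← map_one pglK]
      refine ((pglK_eq_iff _ _).mpr ⟨f, hf0, ?_⟩).symm
      rw [Units.val_mul, hM]
      ext i k
      fin_cases i <;> fin_cases k <;> simp
    refine eq_of_mem_Tset_of_sq_eq_one hM ht ?_ ?_
    · rintro rfl
      rw [map_one, eq_comm, mul_inv_eq_iff_eq_mul, one_mul, mul_eq_left, ← map_one
        SemidirectProduct.inl, SemidirectProduct.inl_inj] at htj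
      exact hM1 htj
    · apply SemidirectProduct.inl_injective (φ := JAct)
      rw [map_mul, htj, map_one, conj_mul, ← map_mul, hM2]
      simp
  · intro hj x
    refine ⟨conj_mem_of_commute hM hj, fun hx => ?_⟩
    have hj' : j⁻¹ * SemidirectProduct.inl (pglK M) * j⁻¹⁻¹ = SemidirectProduct.inl (pglK M) := by
      nth_rewrite 1 [← hj]
      group
    have := conj_mem_of_commute hM hj' hx
    convert this using 1
    group

end
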